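/- Let H be a real Hilbert space, 𝒜 a bounded linear operator on H, g, ν ∈ H with g ≠ 0, and α, β, a₁, a₂, X₀ real numbers with a₁, a₂ > 0. Set ζ₀ := (X₀/‖g‖²)·g, Ā* z := 𝒜* z − β⟨ν,z⟩g, w(t) := −a₂·exp(−(t−T)Ā*) g, and c(t) := −∫_t^T ( β·X₀·⟨w(s),ν⟩ + (α²/(4a₁))·⟨w(s),ν⟩² ) ds for t ∈ [0,T]. Then the function v(t,z) := ⟨w(t), z⟩ + c(t) satisfies, for every t ∈ [0,T] and every z ∈ H: (i) the terminal condition v(T,z) = −a₂·⟨g, z⟩, and (ii) the Hamilton–Jacobi–Bellman identity ∂v/∂t (t,z) = −⟨𝒜 z − β⟨g,z⟩ν − β⟨g,ζ₀⟩ν, w(t)⟩ + (α²/(4a₁))·⟨w(t), ν⟩², where ∂v/∂t denotes the derivative of the real-valued function t ↦ v(t,z). -/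

import Mathlib

/-- The function `w(t) = −a₂ exp(−(t−T) Ā*) g`. -/
noncomputable def wHJB {H : Type*} [NormedAddCommGroup H] [InnerProductSpace ℝ H]
    [CompleteSpace H] (Abar : H →L[ℝ] H) (g : H) (a₂ T t : ℝ) : H :=
  -a₂ • NormedSpace.exp (-(t - T) • Abar) g

/-- The function `c(t) = −∫_t^T ( β X₀ ⟨w(s),ν⟩ + (α²/(4a₁)) ⟨w(s),ν⟩² ) ds`. -/
noncomputable def cHJB {H : Type*} [NormedAddCommGroup H] [InnerProductSpace ℝ H]
    [CompleteSpace H] (Abar : H →L[ℝ] H) (g ν : H) (α β a₁ a₂ X₀ T t : ℝ) : ℝ :=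
  -(∫ s in t..T, (β * X₀ * (inner ℝ (wHJB Abar g a₂ T s) ν : ℝ) +
      α ^ 2 / (4 * a₁) * (inner ℝ (wHJB Abar g a₂ T s) ν : ℝ) ^ 2))

/-- The candidate value function `v(t,z) = ⟨w(t), z⟩ + c(t)`. -/
noncomputable def vHJB {H : Type*} [NormedAddCommGroup H] [InnerProductSpace ℝ H]
    [CompleteSpace H] (Abar : H →L[ℝ] H) (g ν : H) (α β a₁ a₂ X₀ T : ℝ) (t : ℝ) (z : H) : ℝ :=
  (inner ℝ (wHJB Abar g a₂ T t) z : ℝ) + cHJB Abar g ν α β a₁ a₂ X₀ T t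

/-!
The vector `w` solves the backward linear equation `w' = -Ā* w` with `w(T) = -a₂ g`, and by the
fundamental theorem of calculus `c'` is the integrand of `c`. Since `Ā*` is the adjoint of
`z ↦ 𝒜 z - β⟨g, z⟩ν`, the term `⟨w', z⟩` is exactly the `z`-linear part of the right-hand side;
because `⟨g, ζ₀⟩ = X₀`, the remaining terms are `c'`.
-/

open scoped ComplexConjugate

section ExponentialFlow

variable {𝕂 E : Type*} [RCLike 𝕂] [NormedAddCommGroup E] [NormedSpace 𝕂 E] [CompleteSpace E]

theorem hasDerivAt_exp_smul_apply (A : E →L[𝕂] E) (x : E) (t : 𝕂) :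
    HasDerivAt (fun s : 𝕂 => NormedSpace.exp (s • A) x) (A (NormedSpace.exp (t • A) x)) t := by
  simpa using (hasDerivAt_exp_smul_const' A t).clm_apply (hasDerivAt_const t x)

end ExponentialFlow

section InnerProduct

variable {𝕜 E F : Type*} [RCLike 𝕜]
  [NormedAddCommGroup E] [InnerProductSpace 𝕜 E] [CompleteSpace E]
  [NormedAddCommGroup F] [InnerProductSpace 𝕜 F] [CompleteSpace F]

theorem inner_adjoint_sub_smul_inner_left (A : E →L[𝕜] F) (g z : E) (ν w : F) (β : 𝕜) :
    inner 𝕜 (ContinuousLinearMap.adjoint A w - (β * inner 𝕜 ν w) • g) z =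
      inner 𝕜 w (A z - (conj β * inner 𝕜 g z) • ν) := by
  simp only [inner_sub_left, inner_sub_right, inner_smul_left, inner_smul_right,
    ContinuousLinearMap.adjoint_inner_left, map_mul, inner_conj_symm]
  ring

end InnerProduct

section RealInnerProduct

variable {H : Type*} [NormedAddCommGroup H] [InnerProductSpace ℝ H]

theorem real_inner_div_norm_sq_smul_self {g : H} (hg : g ≠ 0) (c : ℝ) :
    inner ℝ g ((c / ‖g‖ ^ 2) • g) = c := by
  rw [real_inner_smul_right, real_inner_self_eq_norm_sq,
    div_mul_cancel₀ _ (pow_ne_zero 2 (norm_ne_zero_iff.mpr hg))]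

theorem hasDerivAt_inner_sub_integral {w : ℝ → H} {w' : H} {f : ℝ → ℝ} {t : ℝ}
    (hw : HasDerivAt w w' t) (hf : Continuous f) (z : H) (T : ℝ) :
    HasDerivAt (fun s => inner ℝ (w s) z - ∫ r in s..T, f r) (inner ℝ w' z + f t) t := by
  have h_inner : HasDerivAt (fun s => inner ℝ (w s) z) (inner ℝ w' z) t := by
    simpa using hw.inner ℝ (hasDerivAt_const t z)
  have h_integral : HasDerivAt (fun s => ∫ r in T..s, f r) (f t) t :=
    (hf.integral_hasStrictDerivAt T t).hasDerivAt
  simp only [intervalIntegral.integral_symm T, sub_neg_eq_add]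
  exact h_inner.add h_integral

end RealInnerProduct

section HJB

variable {H : Type*} [NormedAddCommGroup H] [InnerProductSpace ℝ H] [CompleteSpace H]

theorem wHJB_self (Abar : H →L[ℝ] H) (g : H) (a₂ T : ℝ) : wHJB Abar g a₂ T T = -a₂ • g := by
  simp [wHJB]

theorem hasDerivAt_wHJB (Abar : H →L[ℝ] H) (g : H) (a₂ T t : ℝ) :
    HasDerivAt (wHJB Abar g a₂ T) (-Abar (wHJB Abar g a₂ T t)) t := by
  have h_time : HasDerivAt (fun s : ℝ => -(s - T)) (-1) t := ((hasDerivAt_id t).sub_const T).neg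
  have h_flow := (hasDerivAt_exp_smul_apply Abar g (-(t - T))).scomp t h_time
  exact (h_flow.const_smul (-a₂)).congr_deriv (by simp [wHJB])

theorem continuous_wHJB (Abar : H →L[ℝ] H) (g : H) (a₂ T : ℝ) : Continuous (wHJB Abar g a₂ T) :=
  continuous_iff_continuousAt.mpr fun t => (hasDerivAt_wHJB Abar g a₂ T t).continuousAt

/-- Here `κ` stands for `α² / (4 a₁)`, and the initial datum `X₀` enters as `⟨g, ζ₀⟩`. -/
theorem hjb_solution_general (𝒜 : H →L[ℝ] H) (g ν ζ₀ : H) (β κ a₂ T : ℝ) (Abar : H →L[ℝ] H)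
    (hAbar : ∀ z, Abar z = ContinuousLinearMap.adjoint 𝒜 z - (β * inner ℝ ν z) • g)
    (v : ℝ → H → ℝ)
    (hv : ∀ t z, v t z = inner ℝ (wHJB Abar g a₂ T t) z -
      ∫ s in t..T, (β * inner ℝ g ζ₀ * inner ℝ (wHJB Abar g a₂ T s) ν +
        κ * inner ℝ (wHJB Abar g a₂ T s) ν ^ 2)) :
    (∀ z, v T z = -a₂ * inner ℝ g z) ∧
      ∀ t z, HasDerivAt (fun s => v s z)
        (-inner ℝ (𝒜 z - (β * inner ℝ g z) • ν - (β * inner ℝ g ζ₀) • ν) (wHJB Abar g a₂ T t) +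
          κ * inner ℝ (wHJB Abar g a₂ T t) ν ^ 2) t := by
  refine ⟨fun z => ?_, fun t z => ?_⟩
  · rw [hv, intervalIntegral.integral_same, sub_zero, wHJB_self, real_inner_smul_left]
  · have h_running_cost : Continuous fun s => β * inner ℝ g ζ₀ * inner ℝ (wHJB Abar g a₂ T s) ν +
        κ * inner ℝ (wHJB Abar g a₂ T s) ν ^ 2 := by
      have := continuous_wHJB Abar g a₂ T
      fun_prop
    have h_duality : inner ℝ (Abar (wHJB Abar g a₂ T t)) z =
        inner ℝ (wHJB Abar g a₂ T t) (𝒜 z - (β * inner ℝ g z) • ν) := by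
      rw [hAbar, inner_adjoint_sub_smul_inner_left, conj_trivial]
    simp only [hv]
    refine (hasDerivAt_inner_sub_integral (hasDerivAt_wHJB Abar g a₂ T t)
      h_running_cost z T).congr_deriv ?_
    rw [inner_neg_left, h_duality, real_inner_comm, inner_sub_left _ ((β * inner ℝ g ζ₀) • ν),
      real_inner_smul_left, real_inner_comm ν]
    ring

end HJB

/-- Let `H` be a real Hilbert space, `𝒜` a bounded operator on `H`, `g ≠ 0`, `ν ∈ H` and
`α, β, a₁, a₂, X₀ ∈ ℝ` with `a₁, a₂ > 0`.  With `ζ₀ = (X₀/‖g‖²) g`,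
`Ā* z = 𝒜* z − β ⟨ν,z⟩ g`, `w(t) = −a₂ exp(−(t−T) Ā*) g` and
`c(t) = −∫_t^T ( β X₀ ⟨w(s),ν⟩ + (α²/(4a₁)) ⟨w(s),ν⟩² ) ds`, the function
`v(t,z) = ⟨w(t), z⟩ + c(t)` satisfies the terminal condition `v(T,z) = −a₂ ⟨g,z⟩` and the
Hamilton–Jacobi–Bellman identity
`∂v/∂t (t,z) = −⟨𝒜 z − β⟨g,z⟩ν − β⟨g,ζ₀⟩ν, w(t)⟩ + (α²/(4a₁)) ⟨w(t),ν⟩²`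
for all `t ∈ [0,T]` and `z ∈ H`. -/
theorem hjb_solution
    {H : Type*} [NormedAddCommGroup H] [InnerProductSpace ℝ H] [CompleteSpace H]
    (𝒜 : H →L[ℝ] H) (g ν : H) (hg : g ≠ 0)
    (α β a₁ a₂ X₀ T : ℝ) (ha₁ : 0 < a₁) (ha₂ : 0 < a₂) (hT : 0 < T)
    (Abar : H →L[ℝ] H)
    (hAbar : ∀ z : H, Abar z = ContinuousLinearMap.adjoint 𝒜 z - (β * (inner ℝ ν z : ℝ)) • g) :
    (∀ z : H, vHJB Abar g ν α β a₁ a₂ X₀ T T z = -a₂ * (inner ℝ g z : ℝ)) ∧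
      (∀ t ∈ Set.Icc (0 : ℝ) T, ∀ z : H,
        HasDerivAt (fun s : ℝ => vHJB Abar g ν α β a₁ a₂ X₀ T s z)
          (-(inner ℝ (𝒜 z - (β * (inner ℝ g z : ℝ)) • ν
                - (β * (inner ℝ g ((X₀ / ‖g‖ ^ 2) • g) : ℝ)) • ν)
              (wHJB Abar g a₂ T t) : ℝ)
            + α ^ 2 / (4 * a₁) * (inner ℝ (wHJB Abar g a₂ T t) ν : ℝ) ^ 2) t) := by
  have h_offset := real_inner_div_norm_sq_smul_self hg X₀
  have h_general := hjb_solution_general 𝒜 g ν ((X₀ / ‖g‖ ^ 2) • g) β (α ^ 2 / (4 * a₁)) a₂ T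
    Abar hAbar (vHJB Abar g ν α β a₁ a₂ X₀ T) fun t z => by
      rw [vHJB, cHJB, h_offset, ← sub_eq_add_neg]
  exact ⟨h_general.1, fun t _ => h_general.2 t⟩
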